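/- For h ≥ 0 let x_h be the sequence of length 2^{h+1} − 1 defined by x_h[i] = (h − v₂(i))·2^{h+1} + i, where v₂(i) is the 2-adic valuation of i (its Cartesian tree is the complete binary tree of height h). Then for every h ≥ 1, |NG(x_h)| = 2·|NG(x_{h−1})| + 2(h+1). -/

import Mathlib

/-- A sequence of length `n`: a function `ℕ → ℤ` injective on positions `1,…,n`. -/
def IsSeq (n : ℕ) (x : ℕ → ℤ) : Prop := Set.InjOn x (Set.Icc 1 n)

/-- Parent-distance table: `fwdPD x i = i - max{ j | 1 ≤ j < i, x j < x i }` if such `j`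
exists, `0` otherwise. -/
def fwdPD (x : ℕ → ℤ) (i : ℕ) : ℕ :=
  if h : ((Finset.Ico 1 i).filter (fun j => x j < x i)).Nonempty then
    i - ((Finset.Ico 1 i).filter (fun j => x j < x i)).max' h
  else 0

/-- Reverse parent-distance table: `revPD n x i = min{ j | i < j ≤ n, x j < x i } - i` if
such `j` exists, `0` otherwise. -/
def revPD (n : ℕ) (x : ℕ → ℤ) (i : ℕ) : ℕ :=
  if h : ((Finset.Ioc i n).filter (fun j => x j < x i)).Nonempty then
    ((Finset.Ioc i n).filter (fun j => x j < x i)).min' h - i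
  else 0

/-- The swap `τ(x,i)`: exchanges positions `i` and `i+1`. -/
def swapSeq (x : ℕ → ℤ) (i : ℕ) : ℕ → ℤ :=
  fun j => if j = i then x (i + 1) else if j = i + 1 then x i else x j

/-- The parent-distance table of a sequence of length `n`, as a function on `Fin n`
(position `k : Fin n` corresponds to index `k+1 ∈ {1,…,n}`). -/
def PDvec (n : ℕ) (x : ℕ → ℤ) : Fin n → ℕ := fun k => fwdPD x (k.1 + 1)

/-- `NGat n x i` is the set of parent-distance tables obtained by a swap at position `i`
(`1 ≤ i ≤ n-1`) from some sequence `z` having the same Cartesian tree (i.e. the same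
parent-distance table) as `x`; it is empty for `i` out of range. -/
def NGat (n : ℕ) (x : ℕ → ℤ) (i : ℕ) : Set (Fin n → ℕ) :=
  {P | 1 ≤ i ∧ i + 1 ≤ n ∧
    ∃ z, IsSeq n z ∧ PDvec n z = PDvec n x ∧ P = PDvec n (swapSeq z i)}

/-- The neighborhood of (the Cartesian tree of) `x` in the swap graph. -/
def NG (n : ℕ) (x : ℕ → ℤ) : Set (Fin n → ℕ) := ⋃ i, NGat n x i

/-- A sequence of length `2^(h+1) - 1` whose Cartesian tree is the complete binary tree
of height `h`: `x_h[i] = (h - v₂(i)) * 2^(h+1) + i`, where `v₂` is the 2-adic valuation. -/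
def compSeq (h : ℕ) : ℕ → ℤ :=
  fun i => ((h - padicValNat 2 i : ℕ) : ℤ) * (2 ^ (h + 1) : ℕ) + (i : ℤ)

/-!
Of two positions `i`, `i + 1`, one is an ancestor of the other in the Cartesian tree. At an ascent
this is `i`, and the result of the swap depends only on where the increased entry at `i` ends up
in the right spine of its left subtree. Every place on that spine can be realised, so the swap
yields one tree more than the spine has nodes; descents are reduced to ascents by reversal. Swaps
at distinct positions never yield the same tree, so `|NG x|` is a sum over positions. Splitting a
sequence at its root, this sum is the sum for the two subtrees plus the contribution of the two
swaps that involve the root, and these two spines have `h` nodes each in the complete binary tree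
of height `h`.
-/

/-! ### Preliminaries -/

lemma ncard_image_congr {α β γ : Type*} {s : Set α} {f : α → β} {g : α → γ}
    (h : ∀ a ∈ s, ∀ b ∈ s, f a = f b ↔ g a = g b) : (f '' s).ncard = (g '' s).ncard := by
  choose r hr hfr using fun p (hp : p ∈ f '' s) => hp
  refine Set.ncard_congr (fun p hp => g (r p hp)) (fun p hp => ⟨_, hr p hp, rfl⟩) ?_ ?_
  · intro p q hp hq hpq
    rw [← hfr p hp, ← hfr q hq]
    exact (h _ (hr p hp) _ (hr q hq)).2 hpq
  · rintro _ ⟨a, ha, rfl⟩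
    have hfa : f a ∈ f '' s := ⟨a, ha, rfl⟩
    exact ⟨f a, hfa, (h _ (hr _ hfa) _ ha).1 (hfr _ hfa)⟩

lemma exists_sub_lt (n : ℕ) (x : ℕ → ℤ) :
    ∃ M, ∀ k l, 1 ≤ k → k ≤ n → 1 ≤ l → l ≤ n → x k - x l < M := by
  obtain ⟨B, hB⟩ := ((Set.finite_Icc 1 n).image fun k => |x k|).bddAbove
  refine ⟨2 * B + 1, fun k l hk hkn hl hln => ?_⟩
  have hk' := hB ⟨k, ⟨hk, hkn⟩, rfl⟩
  have hl' := hB ⟨l, ⟨hl, hln⟩, rfl⟩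
  linarith [le_abs_self (x k), neg_abs_le (x l)]

lemma mul_add_lt_mul_add_iff {A B N r s : ℕ} (hr : r < N) (hs : s < N) :
    A * N + r < B * N + s ↔ A < B ∨ A = B ∧ r < s := by
  rcases lt_trichotomy A B with h | rfl | h
  · have := Nat.mul_le_mul_right N (Nat.succ_le_of_lt h)
    rw [Nat.succ_mul] at this
    omega
  · omega
  · have := Nat.mul_le_mul_right N (Nat.succ_le_of_lt h)
    rw [Nat.succ_mul] at this
    omega

lemma padicValNat_lt_of_lt_pow {p s r : ℕ} (hr : 1 ≤ r) (hrs : r < p ^ s) :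
    padicValNat p r < s :=
  (padicValNat_le_nat_log r).trans_lt (Nat.log_lt_of_lt_pow (by omega) hrs)

lemma padicValNat_prime_pow_add {p s r : ℕ} [hp : Fact p.Prime] (hr : 1 ≤ r) (hrs : r < p ^ s) :
    padicValNat p (p ^ s + r) = padicValNat p r := by
  have hval : padicValRat p r < padicValRat p (p ^ s : ℕ) := by
    rw [padicValRat.of_nat, padicValRat.of_nat, padicValNat.prime_pow]
    exact_mod_cast padicValNat_lt_of_lt_pow hr hrs
  have hadd := padicValRat.add_eq_of_lt (p := p) (by positivity) (by positivity)
    (by exact_mod_cast (pow_pos hp.out.pos s).ne') hval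
  rw [← Nat.cast_add, padicValRat.of_nat, padicValRat.of_nat, add_comm] at hadd
  exact_mod_cast hadd

lemma one_le_two_pow_succ_sub_one (h : ℕ) : 1 ≤ 2 ^ (h + 1) - 1 :=
  Nat.le_sub_one_of_lt (Nat.one_lt_two_pow (Nat.succ_ne_zero h))

lemma two_pow_add_two_sub_one (h : ℕ) :
    2 ^ (h + 2) - 1 = 2 ^ (h + 1) - 1 + 1 + (2 ^ (h + 1) - 1) := by
  have := Nat.one_le_two_pow (n := h + 1)
  rw [pow_succ]
  omega

/-! ### Nearest smaller entries -/

/-- The position of the nearest smaller entry to the left of position `i`, with `0` standing for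
"none". It carries the same information as `fwdPD x i`, without the distance arithmetic. -/
def prevSmaller (x : ℕ → ℤ) (i : ℕ) : ℕ := ((Finset.Ico 1 i).filter (x · < x i)).sup id

section PrevSmaller

variable {n i j d : ℕ} {x y : ℕ → ℤ}

lemma prevSmaller_lt (hi : 1 ≤ i) : prevSmaller x i < i := by
  refine (Finset.sup_lt_iff (Nat.bot_eq_zero ▸ hi)).2 fun k hk => ?_
  exact (Finset.mem_Ico.1 (Finset.mem_filter.1 hk).1).2

lemma le_prevSmaller (hj : 1 ≤ j) (hji : j < i) (hlt : x j < x i) : j ≤ prevSmaller x i :=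
  Finset.le_sup (f := id) (by simp [*])

lemma le_of_prevSmaller_lt (hj : prevSmaller x i < j) (hji : j < i) : x i ≤ x j :=
  not_lt.1 fun hlt => hj.not_ge (le_prevSmaller (by omega) hji hlt)

lemma apply_prevSmaller_lt (h : prevSmaller x i ≠ 0) : x (prevSmaller x i) < x i := by
  have hne : ((Finset.Ico 1 i).filter (x · < x i)).Nonempty := by
    contrapose! h
    simp [prevSmaller, h]
  obtain ⟨k, hk, hsup⟩ := Finset.exists_mem_eq_sup _ hne id
  rw [prevSmaller, hsup]
  exact (Finset.mem_filter.1 hk).2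

lemma prevSmaller_eq (hd : d < i) (hlt : d ≠ 0 → x d < x i)
    (hle : ∀ k, d < k → k < i → x i ≤ x k) : prevSmaller x i = d := by
  refine le_antisymm (not_lt.1 fun h => ?_) ?_
  · exact (hle _ h (prevSmaller_lt (by omega))).not_gt (apply_prevSmaller_lt (by omega))
  · rcases Nat.eq_zero_or_pos d with rfl | hpos
    · exact Nat.zero_le _
    · exact le_prevSmaller hpos hd (hlt hpos.ne')

lemma prevSmaller_congr (hi : 1 ≤ i) (h : ∀ k, 1 ≤ k → k ≤ i → x k = y k) :
    prevSmaller x i = prevSmaller y i := by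
  unfold prevSmaller
  congr 1
  refine Finset.filter_congr fun k hk => ?_
  rw [Finset.mem_Ico] at hk
  rw [h k hk.1 hk.2.le, h i hi le_rfl]

lemma fwdPD_eq_ite (x : ℕ → ℤ) (i : ℕ) :
    fwdPD x i = if prevSmaller x i = 0 then 0 else i - prevSmaller x i := by
  unfold fwdPD prevSmaller
  split_ifs with hne h0 h0
  · obtain ⟨k, hk⟩ := hne
    have hk1 := (Finset.mem_Ico.1 (Finset.mem_filter.1 hk).1).1
    have hk0 : k ≤ 0 := h0 ▸ Finset.le_sup (f := id) hk
    omega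
  · rw [Finset.max'_eq_sup', Finset.sup'_eq_sup]
  · rfl
  · rw [Finset.not_nonempty_iff_eq_empty.1 hne] at h0
    exact absurd rfl h0

lemma PDvec_eq_iff :
    PDvec n x = PDvec n y ↔ ∀ i, 1 ≤ i → i ≤ n → prevSmaller x i = prevSmaller y i := by
  refine ⟨fun h i hi hin => ?_, fun h => funext fun k => ?_⟩
  · have hPD : fwdPD x i = fwdPD y i := by
      simpa only [PDvec, Nat.sub_add_cancel hi] using congrFun h ⟨i - 1, by omega⟩
    have hx := prevSmaller_lt (x := x) hi
    have hy := prevSmaller_lt (x := y) hi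
    rw [fwdPD_eq_ite, fwdPD_eq_ite] at hPD
    split_ifs at hPD <;> omega
  · simp only [PDvec, fwdPD_eq_ite, h (k + 1) (by omega) (by omega)]

lemma PDvec_congr (h : ∀ k, 1 ≤ k → k ≤ n → x k = y k) : PDvec n x = PDvec n y :=
  PDvec_eq_iff.2 fun _ hi hin => prevSmaller_congr hi fun k hk hki => h k hk (hki.trans hin)

end PrevSmaller

/-! ### Ancestors in the Cartesian tree -/

/-- Position `e` is an ancestor of position `k` (possibly `k` itself) in the Cartesian tree of `x`:
`x e` is minimal among the entries between the two positions. -/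
def IsAncestor (x : ℕ → ℤ) (e k : ℕ) : Prop := ∀ m, min e k ≤ m → m ≤ max e k → x e ≤ x m

/-- The sequences with the same Cartesian tree as `x`. -/
def treeClass (n : ℕ) (x : ℕ → ℤ) : Set (ℕ → ℤ) := {z | IsSeq n z ∧ PDvec n z = PDvec n x}

section Ancestor

variable {n e k i : ℕ} {x z : ℕ → ℤ}

lemma IsSeq.ne (hx : IsSeq n x) (he : 1 ≤ e) (hen : e ≤ n) (hk : 1 ≤ k) (hkn : k ≤ n)
    (hne : e ≠ k) : x e ≠ x k :=
  fun h => hne (hx ⟨he, hen⟩ ⟨hk, hkn⟩ h)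

lemma IsAncestor.le (h : IsAncestor x e k) : x e ≤ x k := h k (by omega) (by omega)

lemma IsAncestor.lt (h : IsAncestor x e k) (hx : IsSeq n x) (he : 1 ≤ e) (hen : e ≤ n)
    (hk : 1 ≤ k) (hkn : k ≤ n) (hne : e ≠ k) : x e < x k :=
  h.le.lt_of_ne (hx.ne he hen hk hkn hne)

lemma IsAncestor.trans (h : IsAncestor x i e) (h' : IsAncestor x e k) : IsAncestor x i k := by
  intro m hm hm'
  by_cases hme : min i e ≤ m ∧ m ≤ max i e
  · exact h m hme.1 hme.2
  · exact h.le.trans (h' m (by omega) (by omega))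

lemma IsAncestor.lt_of_apply_lt (h : IsAncestor x e k) (hlt : x i < x e) (hie : i < e) :
    i < k := by
  by_contra! hki
  exact (h i (by omega) (by omega)).not_gt hlt

lemma IsAncestor.gt_of_apply_lt (h : IsAncestor x e k) (hlt : x i < x e) (hei : e < i) :
    k < i := by
  by_contra! hik
  exact (h i (by omega) (by omega)).not_gt hlt

lemma isAncestor_succ_iff : IsAncestor x i (i + 1) ↔ x i ≤ x (i + 1) := by
  refine ⟨IsAncestor.le, fun h m hm hm' => ?_⟩
  obtain rfl | rfl : m = i ∨ m = i + 1 := by omega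
  exacts [le_rfl, h]

lemma isAncestor_of_prevSmaller_lt (hk : prevSmaller x e < k) (hke : k ≤ e) :
    IsAncestor x e k := by
  intro m hm hm'
  rcases eq_or_lt_of_le (show m ≤ e by omega) with rfl | hme
  · exact le_rfl
  · exact le_of_prevSmaller_lt (by omega) hme

lemma isAncestor_prevSmaller (h : prevSmaller x i ≠ 0) (hi : 1 ≤ i) :
    IsAncestor x (prevSmaller x i) i := by
  have hlt := prevSmaller_lt (x := x) hi
  intro m hm hm'
  rcases eq_or_lt_of_le (show prevSmaller x i ≤ m by omega) with hpm | hpm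
  · rw [← hpm]
  · exact (apply_prevSmaller_lt h).le.trans
      (isAncestor_of_prevSmaller_lt hpm (by omega) m (by omega) (by omega))

lemma IsAncestor.apply_le (h : IsAncestor x e k) (hx : IsSeq n x) (hz : PDvec n z = PDvec n x)
    (he : 1 ≤ e) (hen : e ≤ n) (hk : 1 ≤ k) (hkn : k ≤ n) : z e ≤ z k := by
  rw [PDvec_eq_iff] at hz
  rcases le_or_gt k e with hke | hek
  · refine (isAncestor_of_prevSmaller_lt ?_ hke).le
    rw [hz e he hen]
    by_contra! hle
    have hp := prevSmaller_lt (x := x) he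
    exact (apply_prevSmaller_lt (by omega)).not_ge (h _ (by omega) (by omega))
  · induction k using Nat.strong_induction_on with
    | _ k ih =>
      have hp := prevSmaller_lt (x := x) hk
      have hep : e ≤ prevSmaller x k :=
        le_prevSmaller he hek (h.lt hx he hen hk hkn hek.ne)
      have hzp : z (prevSmaller x k) ≤ z k := by
        rw [← hz k hk hkn] at hep ⊢
        exact (apply_prevSmaller_lt (by omega)).le
      rcases eq_or_lt_of_le hep with heq | hlt
      · rwa [heq]
      · exact (ih _ hp (fun m hm hm' => h m (by omega) (by omega)) (by omega) (by omega)
          hlt).trans hzp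

lemma PDvec_eq_of_isAncestor (hz : IsSeq n z)
    (h : ∀ e k, 1 ≤ e → e ≤ n → 1 ≤ k → k ≤ n → IsAncestor x e k → z e ≤ z k) :
    PDvec n z = PDvec n x := by
  refine PDvec_eq_iff.2 fun i hi hin => ?_
  have hp := prevSmaller_lt (x := x) hi
  refine prevSmaller_eq hp (fun h0 => ?_) fun k hk hki => ?_
  · refine lt_of_le_of_ne ?_ (hz.ne (by omega) (by omega) hi hin hp.ne)
    exact h _ _ (by omega) (by omega) hi hin (isAncestor_prevSmaller h0 hi)
  · exact h _ _ hi hin (by omega) (by omega) (isAncestor_of_prevSmaller_lt hk hki.le)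

lemma PDvec_eq_iff_isAncestor (hx : IsSeq n x) (hz : IsSeq n z) :
    PDvec n z = PDvec n x ↔
      ∀ e k, 1 ≤ e → e ≤ n → 1 ≤ k → k ≤ n → (IsAncestor z e k ↔ IsAncestor x e k) := by
  refine ⟨fun h e k he hen hk hkn => ?_, fun h => ?_⟩
  · have transfer : ∀ {u v : ℕ → ℤ}, IsSeq n u → PDvec n v = PDvec n u →
        IsAncestor u e k → IsAncestor v e k := fun hu huv ha m hm hm' =>
      IsAncestor.apply_le (fun l hl hl' => ha l (by omega) (by omega)) hu huv he hen
        (by omega) (by omega)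
    exact ⟨transfer hz h.symm, transfer hx h⟩
  · exact PDvec_eq_of_isAncestor hz fun e k he hen hk hkn ha =>
      ((h e k he hen hk hkn).2 ha).le

lemma PDvec_eq_of_lt_iff (h : ∀ k l, 1 ≤ k → k ≤ n → 1 ≤ l → l ≤ n → (z k < z l ↔ x k < x l)) :
    PDvec n z = PDvec n x := by
  refine PDvec_eq_iff.2 fun i hi hin => ?_
  have hp := prevSmaller_lt (x := x) hi
  refine prevSmaller_eq hp (fun h0 => ?_) fun k hk hki => ?_
  · exact (h _ _ (by omega) (by omega) hi hin).2 (apply_prevSmaller_lt h0)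
  · exact not_lt.1 ((h _ _ (by omega) (by omega) hi hin).not.2
      (le_of_prevSmaller_lt hk hki).not_gt)

lemma treeClass.isAncestor_iff (hx : IsSeq n x) (hz : z ∈ treeClass n x) (he : 1 ≤ e)
    (hen : e ≤ n) (hk : 1 ≤ k) (hkn : k ≤ n) : IsAncestor z e k ↔ IsAncestor x e k :=
  (PDvec_eq_iff_isAncestor hx hz.1).1 hz.2 e k he hen hk hkn

lemma lt_succ_iff_of_PDvec_eq (hz : PDvec n z = PDvec n x) (hi : 1 ≤ i) (hin : i + 1 ≤ n) :
    z i < z (i + 1) ↔ x i < x (i + 1) := by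
  have key : ∀ u : ℕ → ℤ, u i < u (i + 1) ↔ prevSmaller u (i + 1) = i := fun u => by
    refine ⟨fun h => prevSmaller_eq (by omega) (fun _ => h) (by omega), fun h => ?_⟩
    have := apply_prevSmaller_lt (x := u) (i := i + 1) (by omega)
    rwa [h] at this
  rw [key, key, PDvec_eq_iff.1 hz _ (by omega) hin]

end Ancestor

/-! ### Swapping two adjacent entries -/

section Swap

variable {n i j : ℕ} {x y z : ℕ → ℤ}

lemma swapSeq_apply_left (z : ℕ → ℤ) (i : ℕ) : swapSeq z i i = z (i + 1) := by simp [swapSeq]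

lemma swapSeq_apply_right (z : ℕ → ℤ) (i : ℕ) : swapSeq z i (i + 1) = z i := by simp [swapSeq]

lemma swapSeq_apply_of_ne (h : j ≠ i) (h' : j ≠ i + 1) : swapSeq z i j = z j := by
  simp [swapSeq, h, h']

lemma swapSeq_eq_comp_swap (z : ℕ → ℤ) (i : ℕ) : swapSeq z i = z ∘ Equiv.swap i (i + 1) := by
  funext j
  simp only [swapSeq, Function.comp_apply, Equiv.swap_apply_def]
  split_ifs <;> rfl

lemma IsSeq.swapSeq (hz : IsSeq n z) (hi : 1 ≤ i) (hin : i + 1 ≤ n) :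
    IsSeq n (swapSeq z i) := by
  rw [swapSeq_eq_comp_swap]
  refine Set.InjOn.comp hz (Equiv.injective _).injOn fun j hj => ?_
  rw [Set.mem_Icc] at hj ⊢
  rw [Equiv.swap_apply_def]
  split_ifs <;> omega

lemma NGat_eq_image (hi : 1 ≤ i) (hin : i + 1 ≤ n) :
    NGat n x i = (fun z => PDvec n (swapSeq z i)) '' treeClass n x := by
  ext P
  simp only [NGat, treeClass, Set.mem_image, Set.mem_ofPred_eq, hi, hin, true_and, and_assoc,
    eq_comm (a := P)]

lemma prevSmaller_swapSeq_of_lt_left (hj : 1 ≤ j) (hji : j < i) :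
    prevSmaller (swapSeq z i) j = prevSmaller z j :=
  prevSmaller_congr hj fun _ _ _ => swapSeq_apply_of_ne (by omega) (by omega)

lemma prevSmaller_swapSeq_succ (hi : 1 ≤ i) (hlt : z i < z (i + 1)) :
    prevSmaller (swapSeq z i) (i + 1) = prevSmaller z i := by
  have hp := prevSmaller_lt (x := z) hi
  refine prevSmaller_eq (by omega) (fun h0 => ?_) fun k hk hki => ?_
  · rw [swapSeq_apply_right, swapSeq_apply_of_ne (by omega) (by omega)]
    exact apply_prevSmaller_lt h0
  · rw [swapSeq_apply_right]
    rcases eq_or_ne k i with rfl | hne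
    · exact swapSeq_apply_left z k ▸ hlt.le
    · rw [swapSeq_apply_of_ne hne (by omega)]
      exact le_of_prevSmaller_lt hk (by omega)

/-- The entry `z i`, smaller than `z (i + 1)`, moves one place to the right, and whoever had it as
nearest smaller entry follows. -/
lemma prevSmaller_swapSeq_of_gt (hi : 1 ≤ i) (hlt : z i < z (i + 1)) (hij : i + 1 < j) :
    prevSmaller (swapSeq z i) j = if prevSmaller z j = i then i + 1 else prevSmaller z j := by
  have hp := prevSmaller_lt (x := z) (i := j) (by omega)
  have happly := apply_prevSmaller_lt (x := z) (i := j)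
  have hle : ∀ k, prevSmaller z j < k → k < j → z j ≤ z k := fun _ => le_of_prevSmaller_lt
  split_ifs with hpi
  · refine prevSmaller_eq hij (fun _ => ?_) fun k hk hkj => ?_
    · rw [swapSeq_apply_right, swapSeq_apply_of_ne (by omega) (by omega), ← hpi]
      exact happly (by omega)
    · rw [swapSeq_apply_of_ne (by omega) (by omega), swapSeq_apply_of_ne (by omega) (by omega)]
      exact hle k (by omega) hkj
  · have hyj : swapSeq z i j = z j := swapSeq_apply_of_ne (by omega) (by omega)
    refine prevSmaller_eq hp (fun h0 => ?_) fun k hk hkj => ?_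
    · rcases eq_or_ne (prevSmaller z j) (i + 1) with hp1 | hp1
      · rw [hyj, hp1, swapSeq_apply_right]
        exact hlt.trans (hp1 ▸ happly h0)
      · rw [hyj, swapSeq_apply_of_ne hpi hp1]
        exact happly h0
    · rw [hyj]
      unfold swapSeq
      split_ifs with hki hki'
      · exact hle _ (by omega) (by omega)
      · exact hle _ (by omega) (by omega)
      · exact hle k hk hkj

lemma PDvec_swapSeq_eq_iff (hzw : PDvec n z = PDvec n y) (hi : 1 ≤ i) (hin : i + 1 ≤ n)
    (hz : z i < z (i + 1)) :
    PDvec n (swapSeq z i) = PDvec n (swapSeq y i) ↔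
      prevSmaller (swapSeq z i) i = prevSmaller (swapSeq y i) i := by
  have hy : y i < y (i + 1) := (lt_succ_iff_of_PDvec_eq hzw hi hin).1 hz
  rw [PDvec_eq_iff] at hzw ⊢
  refine ⟨fun h => h i hi (by omega), fun h j hj hjn => ?_⟩
  rcases lt_trichotomy j i with hji | rfl | hij
  · rw [prevSmaller_swapSeq_of_lt_left hj hji, prevSmaller_swapSeq_of_lt_left hj hji,
      hzw j hj hjn]
  · exact h
  · rcases eq_or_lt_of_le (Nat.succ_le_of_lt hij) with rfl | hlt
    · rw [prevSmaller_swapSeq_succ hi hz, prevSmaller_swapSeq_succ hi hy, hzw i hi (by omega)]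
    · rw [prevSmaller_swapSeq_of_gt hi hz hlt, prevSmaller_swapSeq_of_gt hi hy hlt,
        hzw j hj hjn]

end Swap

/-! ### Counting the results of a swap at an ascent -/

open scoped Classical in
/-- The right spine of the left subtree of position `i`: the positions on the path from `i` down to
`i - 1`, without `i` itself. -/
noncomputable def leftSpine (x : ℕ → ℤ) (i : ℕ) : Finset ℕ :=
  {j ∈ Finset.Ico 1 i | IsAncestor x i j ∧ IsAncestor x j (i - 1)}

open scoped Classical in
/-- The left spine of the right subtree of position `i` in a sequence of length `n`: the positions
on the path from `i` down to `i + 1`, without `i` itself. -/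
noncomputable def rightSpine (n : ℕ) (x : ℕ → ℤ) (i : ℕ) : Finset ℕ :=
  {j ∈ Finset.Ioc i n | IsAncestor x i j ∧ IsAncestor x j (i + 1)}

section Ascent

variable {n i d : ℕ} {x z : ℕ → ℤ}

lemma mem_leftSpine {j : ℕ} : j ∈ leftSpine x i ↔
    (1 ≤ j ∧ j < i) ∧ IsAncestor x i j ∧ IsAncestor x j (i - 1) := by
  simp only [leftSpine, Finset.mem_filter, Finset.mem_Ico]

lemma mem_rightSpine {j : ℕ} : j ∈ rightSpine n x i ↔
    (i < j ∧ j ≤ n) ∧ IsAncestor x i j ∧ IsAncestor x j (i + 1) := by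
  simp only [rightSpine, Finset.mem_filter, Finset.mem_Ioc]

/-- The possible nearest smaller entries of position `i` when its value is increased. -/
lemma mem_insert_prevSmaller_leftSpine (hi : 1 ≤ i) :
    d ∈ insert (prevSmaller x i) (leftSpine x i) ↔
      d < i ∧ prevSmaller x i ≤ d ∧ (d ≠ 0 → ∀ k, d < k → k < i → x d ≤ x k) := by
  have hp := prevSmaller_lt (x := x) hi
  rw [Finset.mem_insert, mem_leftSpine]
  constructor
  · rintro (rfl | ⟨⟨hd, hdi⟩, hid, hanc⟩)
    · exact ⟨hp, le_rfl, fun h0 k hk hki => isAncestor_prevSmaller h0 hi k (by omega) (by omega)⟩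
    · refine ⟨hdi, not_lt.1 fun hdp => ?_, fun _ k hk hki => hanc k (by omega) (by omega)⟩
      exact (apply_prevSmaller_lt (by omega)).not_ge (hid _ (by omega) (by omega))
  · rintro ⟨hdi, hpd, hle⟩
    refine or_iff_not_imp_left.2 fun hne => ⟨⟨by omega, hdi⟩,
      isAncestor_of_prevSmaller_lt (by omega) hdi.le, fun m hm hm' => ?_⟩
    rcases eq_or_lt_of_le (show d ≤ m by omega) with rfl | hdm
    · exact le_rfl
    · exact hle (by omega) m hdm (by omega)

lemma card_insert_prevSmaller_leftSpine (x : ℕ → ℤ) (i : ℕ) :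
    (insert (prevSmaller x i) (leftSpine x i)).card = (leftSpine x i).card + 1 := by
  refine Finset.card_insert_of_notMem fun h => ?_
  rw [mem_leftSpine] at h
  exact (apply_prevSmaller_lt (by omega)).not_ge h.2.1.le

lemma leftSpine_congr (hx : IsSeq n x) (hz : z ∈ treeClass n x) (hin : i ≤ n) :
    leftSpine z i = leftSpine x i := by
  ext j
  rw [mem_leftSpine, mem_leftSpine]
  refine and_congr_right fun hj => ?_
  rw [treeClass.isAncestor_iff hx hz (by omega) hin hj.1 (by omega),
    treeClass.isAncestor_iff hx hz hj.1 (by omega) (by omega) (by omega)]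

lemma prevSmaller_swapSeq_mem (hi : 1 ≤ i) (hlt : z i < z (i + 1)) :
    prevSmaller (swapSeq z i) i ∈ insert (prevSmaller z i) (leftSpine z i) := by
  have hd := prevSmaller_lt (x := swapSeq z i) hi
  have hyd := apply_prevSmaller_lt (x := swapSeq z i) (i := i)
  rw [swapSeq_apply_left, swapSeq_apply_of_ne hd.ne (by omega)] at hyd
  have hp := prevSmaller_lt (x := z) hi
  refine (mem_insert_prevSmaller_leftSpine hi).2 ⟨hd, ?_, fun h0 k hk hki => ?_⟩
  · rcases Nat.eq_zero_or_pos (prevSmaller z i) with h0 | h0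
    · omega
    · refine le_prevSmaller h0 hp ?_
      rw [swapSeq_apply_left, swapSeq_apply_of_ne hp.ne (by omega)]
      exact (apply_prevSmaller_lt h0.ne').trans hlt
  · have hyk := le_of_prevSmaller_lt hk hki
    rw [swapSeq_apply_left, swapSeq_apply_of_ne hki.ne (by omega)] at hyk
    exact (hyd h0).le.trans hyk

/-- A large multiple of a function that grows along the branches can be added without changing the
tree, which imposes any prescribed relative order on incomparable nodes. -/
lemma exists_mem_treeClass_lt {f : ℕ → ℤ} (hx : IsSeq n x)
    (hf : ∀ e k, 1 ≤ e → e ≤ n → 1 ≤ k → k ≤ n → IsAncestor x e k → f e ≤ f k) :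
    ∃ z ∈ treeClass n x,
      ∀ k l, 1 ≤ k → k ≤ n → 1 ≤ l → l ≤ n → f k < f l → z k < z l := by
  obtain ⟨M, hM⟩ := exists_sub_lt n x
  set z : ℕ → ℤ := fun k => x k + M * f k
  have hlt : ∀ k l, 1 ≤ k → k ≤ n → 1 ≤ l → l ≤ n → f k < f l → z k < z l := by
    intro k l hk hkn hl hln hfkl
    have hM0 : 0 < M := by simpa only [sub_self] using hM k k hk hkn hk hkn
    have := mul_le_mul_of_nonneg_left (Int.add_one_le_of_lt hfkl) hM0.le
    linarith [hM k l hk hkn hl hln]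
  have hz : IsSeq n z := by
    rintro k ⟨hk, hkn⟩ l ⟨hl, hln⟩ hkl
    have hfkl : f k = f l := le_antisymm
      (not_lt.1 fun h => (hlt l k hl hln hk hkn h).ne' hkl)
      (not_lt.1 fun h => (hlt k l hk hkn hl hln h).ne hkl)
    exact hx ⟨hk, hkn⟩ ⟨hl, hln⟩ (by simpa only [z, hfkl, add_left_inj] using hkl)
  refine ⟨z, ⟨hz, PDvec_eq_of_isAncestor hz fun e k he hen hk hkn h => ?_⟩, hlt⟩
  rcases (hf e k he hen hk hkn h).lt_or_eq with hfek | hfek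
  · exact (hlt e k he hen hk hkn hfek).le
  · simpa only [z, hfek, add_le_add_iff_right] using h.le

/-- The priorities put the right subtree of `i` above everything else, and the part of the left
subtree lying to the right of `d` above that. -/
lemma exists_priority (hx : IsSeq n x) (hi : 1 ≤ i) (hin : i + 1 ≤ n)
    (hlt : x i < x (i + 1)) (hd : d ∈ insert (prevSmaller x i) (leftSpine x i)) :
    ∃ f : ℕ → ℤ,
      (∀ e k, 1 ≤ e → e ≤ n → 1 ≤ k → k ≤ n → IsAncestor x e k → f e ≤ f k) ∧
      f d < f (i + 1) ∧ ∀ k, d < k → k < i → f (i + 1) < f k := by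
  obtain ⟨hdi, hpd, hle⟩ := (mem_insert_prevSmaller_leftSpine hi).1 hd
  have hleft : ∀ e, d < e → e < i → x i < x e := fun e hde hei =>
    (isAncestor_of_prevSmaller_lt (by omega) hei.le).lt hx hi (by omega) (by omega) (by omega)
      hei.ne'
  have hdlt : d ≠ 0 → ∀ e, d < e → e < i → x d < x e := fun h0 e hde hei =>
    (hle h0 e hde hei).lt_of_ne (hx.ne (by omega) (by omega) (by omega) (by omega) hde.ne)
  classical
  let f : ℕ → ℤ := fun k => if d < k ∧ k < i then 2 else if i < k ∧ IsAncestor x i k then 1 else 0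
  have hf2 : ∀ k, d < k → k < i → f k = 2 := fun k hk hki => if_pos ⟨hk, hki⟩
  have hf1 : ∀ k, i < k → IsAncestor x i k → f k = 1 := fun k hk h => by
    simp only [f, hk.not_gt, and_false, if_false, hk, h, and_self, if_true]
  have hf0 : f d = 0 := by
    simp only [f, lt_irrefl, hdi.not_gt, false_and, if_false]
  have hsucc : f (i + 1) = 1 := hf1 _ (Nat.lt_succ_self i) (isAncestor_succ_iff.2 hlt.le)
  refine ⟨f, fun e k he hen hk _ h => ?_, by rw [hf0, hsucc]; decide,
    fun k hk hki => by rw [hsucc, hf2 k hk hki]; decide⟩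
  by_cases he2 : d < e ∧ e < i
  · have hdk : d < k := by
      by_contra! hkd
      exact (h.lt_of_apply_lt (hdlt (by omega) e he2.1 he2.2) he2.1).not_ge hkd
    rw [hf2 e he2.1 he2.2, hf2 k hdk (h.gt_of_apply_lt (hleft e he2.1 he2.2) he2.2)]
  by_cases he1 : i < e ∧ IsAncestor x i e
  · have hik := h.lt_of_apply_lt (he1.2.lt hx hi (by omega) he hen he1.1.ne) he1.1
    rw [hf1 e he1.1 he1.2, hf1 k hik (he1.2.trans h)]
  · simp only [f, he2, he1, if_false]
    split_ifs <;> decide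

lemma exists_prevSmaller_swapSeq_eq (hx : IsSeq n x) (hi : 1 ≤ i) (hin : i + 1 ≤ n)
    (hlt : x i < x (i + 1)) (hd : d ∈ insert (prevSmaller x i) (leftSpine x i)) :
    ∃ z ∈ treeClass n x, prevSmaller (swapSeq z i) i = d := by
  have hdi : d < i := ((mem_insert_prevSmaller_leftSpine hi).1 hd).1
  obtain ⟨f, hf, hfd, hfk⟩ := exists_priority hx hi hin hlt hd
  obtain ⟨z, hz, hzlt⟩ := exists_mem_treeClass_lt hx hf
  refine ⟨z, hz, prevSmaller_eq hdi (fun h0 => ?_) fun k hk hki => ?_⟩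
  · rw [swapSeq_apply_left, swapSeq_apply_of_ne hdi.ne (by omega)]
    exact hzlt _ _ (by omega) (by omega) (by omega) hin hfd
  · rw [swapSeq_apply_left, swapSeq_apply_of_ne hki.ne (by omega)]
    exact (hzlt _ _ (by omega) hin (by omega) (by omega) (hfk k hk hki)).le

lemma image_prevSmaller_swapSeq (hx : IsSeq n x) (hi : 1 ≤ i) (hin : i + 1 ≤ n)
    (hlt : x i < x (i + 1)) :
    (fun z => prevSmaller (swapSeq z i) i) '' treeClass n x =
      insert (prevSmaller x i) (leftSpine x i) := by
  ext d
  refine ⟨?_, fun hd => exists_prevSmaller_swapSeq_eq hx hi hin hlt (by exact_mod_cast hd)⟩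
  rintro ⟨z, hz, rfl⟩
  have hzlt := (lt_succ_iff_of_PDvec_eq hz.2 hi hin).2 hlt
  have hmem := prevSmaller_swapSeq_mem hi hzlt
  rw [leftSpine_congr hx hz (by omega), PDvec_eq_iff.1 hz.2 i hi (by omega)] at hmem
  exact_mod_cast hmem

lemma ncard_NGat_of_lt (hx : IsSeq n x) (hi : 1 ≤ i) (hin : i + 1 ≤ n) (hlt : x i < x (i + 1)) :
    (NGat n x i).ncard = (leftSpine x i).card + 1 := by
  have hdetermined : ∀ z ∈ treeClass n x, ∀ y ∈ treeClass n x,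
      PDvec n (swapSeq z i) = PDvec n (swapSeq y i) ↔
        prevSmaller (swapSeq z i) i = prevSmaller (swapSeq y i) i := fun z hz y hy =>
    PDvec_swapSeq_eq_iff (hz.2.trans hy.2.symm) hi hin
      ((lt_succ_iff_of_PDvec_eq hz.2 hi hin).2 hlt)
  rw [NGat_eq_image hi hin, ncard_image_congr hdetermined,
    image_prevSmaller_swapSeq hx hi hin hlt, Set.ncard_coe_finset,
    card_insert_prevSmaller_leftSpine]

end Ascent

/-! ### Reversal -/

/-- The sequence `x` of length `n` read from right to left, which exchanges the swaps at ascents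
and at descents. -/
def mirror (n : ℕ) (x : ℕ → ℤ) : ℕ → ℤ := fun k => x (n + 1 - k)

section Mirror

variable {n i e k : ℕ} {x y z : ℕ → ℤ}

lemma mirror_mirror_apply (x : ℕ → ℤ) (hk : k ≤ n) : mirror n (mirror n x) k = x k :=
  congrArg x (by omega)

lemma IsSeq.mirror (hx : IsSeq n x) : IsSeq n (mirror n x) := by
  rintro k ⟨hk, hkn⟩ l ⟨hl, hln⟩ h
  have := hx ⟨by omega, by omega⟩ ⟨by omega, by omega⟩ h
  omega

lemma isAncestor_mirror_iff (he : e ≤ n) (hk : k ≤ n) :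
    IsAncestor (mirror n x) e k ↔ IsAncestor x (n + 1 - e) (n + 1 - k) := by
  refine ⟨fun h m hm hm' => ?_, fun h m hm hm' => h _ (by omega) (by omega)⟩
  have := h (n + 1 - m) (by omega) (by omega)
  rwa [mirror, mirror, show n + 1 - (n + 1 - m) = m by omega] at this

lemma PDvec_mirror_mirror (n : ℕ) (x : ℕ → ℤ) : PDvec n (mirror n (mirror n x)) = PDvec n x :=
  PDvec_congr fun _ _ hkn => mirror_mirror_apply x hkn

lemma PDvec_mirror_congr (hx : IsSeq n x) (hz : IsSeq n z) (h : PDvec n z = PDvec n x) :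
    PDvec n (mirror n z) = PDvec n (mirror n x) := by
  refine (PDvec_eq_iff_isAncestor hx.mirror hz.mirror).2 fun e k he hen hk hkn => ?_
  rw [isAncestor_mirror_iff hen hkn, isAncestor_mirror_iff hen hkn]
  exact (PDvec_eq_iff_isAncestor hx hz).1 h _ _ (by omega) (by omega) (by omega) (by omega)

lemma PDvec_mirror_eq_iff (hx : IsSeq n x) (hz : IsSeq n z) :
    PDvec n (mirror n z) = PDvec n (mirror n x) ↔ PDvec n z = PDvec n x := by
  refine ⟨fun h => ?_, PDvec_mirror_congr hx hz⟩
  rw [← PDvec_mirror_mirror n z, ← PDvec_mirror_mirror n x]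
  exact PDvec_mirror_congr hx.mirror hz.mirror h

lemma mirror_mem_treeClass (hx : IsSeq n x) (hz : z ∈ treeClass n x) :
    mirror n z ∈ treeClass n (mirror n x) :=
  ⟨hz.1.mirror, PDvec_mirror_congr hx hz.1 hz.2⟩

lemma swapSeq_congr (h : ∀ k, 1 ≤ k → k ≤ n → z k = y k) (hi : 1 ≤ i) (hin : i + 1 ≤ n) :
    ∀ k, 1 ≤ k → k ≤ n → swapSeq z i k = swapSeq y i k := by
  intro k hk hkn
  unfold swapSeq
  split_ifs
  exacts [h _ (by omega) hin, h _ hi (by omega), h _ hk hkn]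

lemma swapSeq_mirror_apply (hin : i + 1 ≤ n) (hkn : k ≤ n) :
    swapSeq (mirror n z) (n - i) k = mirror n (swapSeq z i) k := by
  simp only [swapSeq, mirror]
  split_ifs <;> first | omega | exact congrArg z (by omega)

lemma NGat_mirror (hx : IsSeq n x) (hi : 1 ≤ i) (hin : i + 1 ≤ n) :
    NGat n (mirror n x) (n - i) = (fun z => PDvec n (mirror n (swapSeq z i))) '' treeClass n x := by
  have hswap : ∀ z, PDvec n (swapSeq (mirror n z) (n - i)) = PDvec n (mirror n (swapSeq z i)) :=
    fun z => PDvec_congr fun _ _ => swapSeq_mirror_apply hin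
  rw [NGat_eq_image (by omega) (by omega)]
  refine Set.Subset.antisymm ?_ ?_
  · rintro _ ⟨z, hz, rfl⟩
    refine ⟨mirror n z, ⟨hz.1.mirror, ?_⟩, ?_⟩
    · rw [← PDvec_mirror_mirror n x]
      exact PDvec_mirror_congr hx.mirror hz.1 hz.2
    · dsimp only
      rw [← hswap]
      exact PDvec_congr (swapSeq_congr (fun _ _ hkn => mirror_mirror_apply z hkn) (by omega)
        (by omega))
  · rintro _ ⟨z, hz, rfl⟩
    exact ⟨mirror n z, mirror_mem_treeClass hx hz, hswap z⟩

lemma ncard_NGat_mirror (hx : IsSeq n x) (hi : 1 ≤ i) (hin : i + 1 ≤ n) :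
    (NGat n (mirror n x) (n - i)).ncard = (NGat n x i).ncard := by
  rw [NGat_mirror hx hi hin, NGat_eq_image hi hin]
  exact ncard_image_congr fun z hz y hy =>
    PDvec_mirror_eq_iff (hy.1.swapSeq hi hin) (hz.1.swapSeq hi hin)

lemma card_leftSpine_mirror (hin : i ≤ n) :
    (leftSpine (mirror n x) i).card = (rightSpine n x (n + 1 - i)).card := by
  refine Finset.card_nbij' (n + 1 - ·) (n + 1 - ·) ?_ ?_ ?_ ?_ <;> intro j hj <;>
    simp only [Finset.mem_coe, mem_leftSpine, mem_rightSpine] at hj ⊢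
  · rw [isAncestor_mirror_iff (by omega) (by omega), isAncestor_mirror_iff (by omega) (by omega),
      show n + 1 - (i - 1) = n + 1 - i + 1 by omega] at hj
    exact ⟨by omega, hj.2⟩
  · rw [isAncestor_mirror_iff (by omega) (by omega), isAncestor_mirror_iff (by omega) (by omega),
      show n + 1 - (i - 1) = n + 1 - i + 1 by omega, show n + 1 - (n + 1 - j) = j by omega]
    exact ⟨by omega, hj.2⟩
  · omega
  · omega

lemma ncard_NGat_of_gt (hx : IsSeq n x) (hi : 1 ≤ i) (hin : i + 1 ≤ n) (hgt : x (i + 1) < x i) :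
    (NGat n x i).ncard = (rightSpine n x (i + 1)).card + 1 := by
  have hlt : mirror n x (n - i) < mirror n x (n - i + 1) := by
    rwa [mirror, mirror, show n + 1 - (n - i) = i + 1 by omega,
      show n + 1 - (n - i + 1) = i by omega]
  rw [← ncard_NGat_mirror hx hi hin, ncard_NGat_of_lt hx.mirror (by omega) (by omega) hlt,
    card_leftSpine_mirror (by omega), show n + 1 - (n - i) = i + 1 by omega]

end Mirror

/-! ### The number of neighbours -/

/-- The number of trees obtained by a swap at position `i` of a sequence of length `n`: one more
than the number of nodes of the spine that the moved entry is threaded into. -/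
noncomputable def swapCount (n : ℕ) (x : ℕ → ℤ) (i : ℕ) : ℕ :=
  (if x i < x (i + 1) then (leftSpine x i).card else (rightSpine n x (i + 1)).card) + 1

section Count

variable {n i i' : ℕ} {x z w : ℕ → ℤ}

lemma ncard_NGat (hx : IsSeq n x) (hi : 1 ≤ i) (hin : i + 1 ≤ n) :
    (NGat n x i).ncard = swapCount n x i := by
  unfold swapCount
  split_ifs with hlt
  · exact ncard_NGat_of_lt hx hi hin hlt
  · exact ncard_NGat_of_gt hx hi hin
      ((not_lt.1 hlt).lt_of_ne (hx.ne (by omega) hin hi (by omega) (by omega)))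

lemma finite_NGat (hx : IsSeq n x) (hi : 1 ≤ i) (hin : i + 1 ≤ n) : (NGat n x i).Finite :=
  Set.finite_of_ncard_ne_zero (by rw [ncard_NGat hx hi hin]; exact Nat.succ_ne_zero _)

lemma swapSeq_lt_succ_iff (hz : IsSeq n z) (hi : 1 ≤ i) (hin : i + 1 ≤ n) :
    swapSeq z i i < swapSeq z i (i + 1) ↔ ¬ z i < z (i + 1) := by
  have := hz.ne hi (by omega) (by omega) hin (by omega)
  rw [swapSeq_apply_left, swapSeq_apply_right]
  omega

lemma le_apply_add_two_of_PDvec_eq (hx : IsSeq n x) (hz : PDvec n z = PDvec n x)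
    (hi : 1 ≤ i) (hin : i + 1 + 1 ≤ n) (h1 : x i < x (i + 1))
    (h2 : x i < x (i + 1 + 1)) : z i ≤ z (i + 1 + 1) := by
  refine IsAncestor.apply_le (fun m hm hm' => ?_) hx hz hi (by omega) (by omega) hin
  obtain rfl | rfl | rfl : m = i ∨ m = i + 1 ∨ m = i + 1 + 1 := by omega
  exacts [le_rfl, h1.le, h2.le]

/-- The swap at `i` toggles the comparison of the entries `i` and `i + 1`, and the swap at `i'`
does not touch them. -/
lemma PDvec_swapSeq_ne_of_add_one_lt (hz : IsSeq n z) (hzw : PDvec n w = PDvec n z)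
    (hi : 1 ≤ i) (hii' : i + 1 < i') (hin : i' + 1 ≤ n) :
    PDvec n (swapSeq w i') ≠ PDvec n (swapSeq z i) := by
  intro h
  have hswap := lt_succ_iff_of_PDvec_eq h hi (by omega)
  rw [swapSeq_lt_succ_iff hz hi (by omega), swapSeq_apply_of_ne (by omega) (by omega),
    swapSeq_apply_of_ne (by omega) (by omega)] at hswap
  have := lt_succ_iff_of_PDvec_eq hzw hi (by omega)
  tauto

lemma PDvec_swapSeq_succ_ne (hz : IsSeq n z) (hw : IsSeq n w) (hzw : PDvec n w = PDvec n z)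
    (hi : 1 ≤ i) (hin : i + 1 + 1 ≤ n) :
    PDvec n (swapSeq w (i + 1)) ≠ PDvec n (swapSeq z i) := by
  intro h
  have hy := hz.swapSeq hi (by omega)
  have hw1 := swapSeq_lt_succ_iff hw (Nat.le_add_left 1 i) hin
  have h0 := lt_succ_iff_of_PDvec_eq h hi (by omega)
  have h1 := lt_succ_iff_of_PDvec_eq (i := i + 1) h (by omega) hin
  rw [swapSeq_lt_succ_iff hz hi (by omega), swapSeq_apply_left,
    swapSeq_apply_of_ne (by omega) (by omega)] at h0
  rw [hw1, swapSeq_apply_right, swapSeq_apply_of_ne (by omega) (by omega)] at h1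
  have hzw0 := lt_succ_iff_of_PDvec_eq hzw hi (by omega)
  have hzw1 := lt_succ_iff_of_PDvec_eq (i := i + 1) hzw (by omega) hin
  have hwne := hw.ne hi (by omega) (Nat.le_add_left 1 (i + 1)) hin (by omega)
  by_cases hz0 : z i < z (i + 1) <;> by_cases hz1 : z (i + 1) < z (i + 1 + 1)
  · omega
  · have hpeak := le_apply_add_two_of_PDvec_eq hz hzw hi hin hz0
    omega
  · have hvalley := le_apply_add_two_of_PDvec_eq hy h hi hin
    rw [swapSeq_apply_left, swapSeq_apply_right, swapSeq_apply_right,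
      swapSeq_apply_of_ne (by omega) (by omega), swapSeq_apply_of_ne (by omega) (by omega)]
      at hvalley
    have := hvalley (by omega) hz1
    have := hw.ne hi (by omega) (Nat.le_add_left 1 i) (by omega) (by omega)
    omega
  · omega

lemma disjoint_NGat (hi : 1 ≤ i) (hii' : i < i') (hin : i' + 1 ≤ n) :
    Disjoint (NGat n x i) (NGat n x i') := by
  rw [NGat_eq_image hi (by omega), NGat_eq_image (by omega) hin, Set.disjoint_left]
  rintro _ ⟨z, hz, rfl⟩ ⟨w, hw, h⟩
  have hwz := hw.2.trans hz.2.symm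
  rcases eq_or_lt_of_le (Nat.succ_le_of_lt hii') with rfl | hlt
  · exact PDvec_swapSeq_succ_ne hz.1 hw.1 hwz hi hin h
  · exact PDvec_swapSeq_ne_of_add_one_lt hz.1 hwz hi hlt hin h

lemma NG_eq_biUnion (n : ℕ) (x : ℕ → ℤ) :
    NG n x = ⋃ i ∈ (Finset.Ico 1 n : Set ℕ), NGat n x i := by
  ext P
  simp only [NG, Set.mem_iUnion, Finset.coe_Ico, Set.mem_Ico, exists_prop]
  exact ⟨fun ⟨i, h⟩ => ⟨i, ⟨h.1, h.2.1⟩, h⟩, fun ⟨i, _, h⟩ => ⟨i, h⟩⟩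

theorem ncard_NG (hx : IsSeq n x) :
    (NG n x).ncard = ∑ i ∈ Finset.Ico 1 n, swapCount n x i := by
  have hdisj : (Finset.Ico 1 n : Set ℕ).PairwiseDisjoint (NGat n x) := by
    intro i hi i' hi' hne
    rw [Finset.coe_Ico, Set.mem_Ico] at hi hi'
    rcases lt_or_gt_of_ne hne with h | h
    · exact disjoint_NGat hi.1 h hi'.2
    · exact (disjoint_NGat hi'.1 h hi.2).symm
  rw [NG_eq_biUnion, Set.Finite.ncard_biUnion (Finset.finite_toSet _)
    (fun i hi => finite_NGat hx (Finset.mem_Ico.1 hi).1 (Finset.mem_Ico.1 hi).2) hdisj,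
    finsum_mem_coe_finset]
  exact Finset.sum_congr rfl fun i hi =>
    ncard_NGat hx (Finset.mem_Ico.1 hi).1 (Finset.mem_Ico.1 hi).2

end Count

/-! ### Decomposition at the root -/

/-- Position `m` is the root of the Cartesian tree of a sequence of length `n`, that is, the
position of its strict minimum. -/
structure IsRoot (n : ℕ) (x : ℕ → ℤ) (m : ℕ) : Prop where
  pos : 1 ≤ m
  le : m ≤ n
  lt : ∀ k, 1 ≤ k → k ≤ n → k ≠ m → x m < x k

/-- The entries of `x` to the right of position `m`, renumbered from `1`. -/
def tailSeq (m : ℕ) (x : ℕ → ℤ) : ℕ → ℤ := fun k => x (m + k)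

open scoped Classical in
/-- The ancestors of position `k` in the Cartesian tree of a sequence of length `n`, including `k`
itself. -/
noncomputable def ancestors (n : ℕ) (x : ℕ → ℤ) (k : ℕ) : Finset ℕ :=
  {j ∈ Finset.Icc 1 n | IsAncestor x j k}

section Root

variable {n a b e i k m : ℕ} {x z : ℕ → ℤ}

lemma mem_ancestors {j : ℕ} : j ∈ ancestors n x k ↔ (1 ≤ j ∧ j ≤ n) ∧ IsAncestor x j k := by
  simp only [ancestors, Finset.mem_filter, Finset.mem_Icc]

lemma ancestors_congr (hx : IsSeq n x) (hz : z ∈ treeClass n x) (hk : 1 ≤ k) (hkn : k ≤ n) :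
    ancestors n z k = ancestors n x k := by
  ext j
  rw [mem_ancestors, mem_ancestors]
  exact and_congr_right fun hj => treeClass.isAncestor_iff hx hz hj.1 hj.2 hk hkn

lemma NG_congr (h : PDvec n z = PDvec n x) : NG n z = NG n x := by
  simp only [NG, NGat, h]

lemma IsSeq.tailSeq (hx : IsSeq (m + b) x) : IsSeq b (tailSeq m x) := by
  rintro k ⟨hk, hkb⟩ l ⟨hl, hlb⟩ h
  have := hx ⟨by omega, by omega⟩ ⟨by omega, by omega⟩ h
  omega

lemma isAncestor_tailSeq_iff : IsAncestor (tailSeq m x) e k ↔ IsAncestor x (m + e) (m + k) := by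
  refine ⟨fun h l hl hl' => ?_, fun h l hl hl' => h _ (by omega) (by omega)⟩
  obtain ⟨j, rfl⟩ := Nat.exists_eq_add_of_le (show m ≤ l by omega)
  exact h j (by omega) (by omega)

lemma rightSpine_tailSeq (b m i : ℕ) (x : ℕ → ℤ) :
    rightSpine (m + b) x (m + i) =
      (rightSpine b (tailSeq m x) i).map (addLeftEmbedding m) := by
  ext j
  simp only [mem_rightSpine, Finset.mem_map, isAncestor_tailSeq_iff, addLeftEmbedding_apply,
    ← add_assoc]
  constructor
  · rintro ⟨hj, h⟩
    obtain ⟨l, rfl⟩ := Nat.exists_eq_add_of_le (show m ≤ j by omega)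
    exact ⟨l, ⟨by omega, h⟩, rfl⟩
  · rintro ⟨l, ⟨hl, h⟩, rfl⟩
    exact ⟨by omega, h⟩

lemma IsRoot.isAncestor (hm : IsRoot n x m) (hk : 1 ≤ k) (hkn : k ≤ n) : IsAncestor x m k := by
  have hm1 := hm.pos
  have hmn := hm.le
  intro l hl hl'
  rcases eq_or_ne l m with rfl | hne
  · exact le_rfl
  · exact (hm.lt l (by omega) (by omega) hne).le

lemma IsRoot.lt_of_isAncestor (hm : IsRoot n x m) (h : IsAncestor x e k) (he : 1 ≤ e)
    (hem : e < m) : k < m :=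
  h.gt_of_apply_lt (hm.lt e he (hem.le.trans hm.le) hem.ne) hem

lemma IsRoot.gt_of_isAncestor (hm : IsRoot n x m) (h : IsAncestor x e k) (hme : m < e)
    (hen : e ≤ n) : m < k :=
  h.lt_of_apply_lt (hm.lt e (hm.pos.trans hme.le) hen hme.ne') hme

lemma IsRoot.ancestors_left (hroot : IsRoot (a + 1 + b) x (a + 1)) (hk : 1 ≤ k) (hka : k ≤ a) :
    ancestors (a + 1 + b) x k = insert (a + 1) (ancestors a x k) := by
  ext j
  rw [Finset.mem_insert, mem_ancestors, mem_ancestors]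
  constructor
  · rintro ⟨⟨hj, hjn⟩, h⟩
    rcases lt_trichotomy j (a + 1) with hja | rfl | hja
    · exact .inr ⟨by omega, h⟩
    · exact .inl rfl
    · have := hroot.gt_of_isAncestor h hja hjn
      omega
  · rintro (rfl | ⟨hj, h⟩)
    · exact ⟨by omega, hroot.isAncestor hk (by omega)⟩
    · exact ⟨by omega, h⟩

lemma IsRoot.card_ancestors_left (hroot : IsRoot (a + 1 + b) x (a + 1)) (hk : 1 ≤ k) (hka : k ≤ a) :
    (ancestors (a + 1 + b) x k).card = (ancestors a x k).card + 1 := by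
  rw [hroot.ancestors_left hk hka]
  refine Finset.card_insert_of_notMem fun h => ?_
  have := (mem_ancestors.1 h).1
  omega

lemma IsRoot.ancestors_right (hroot : IsRoot (a + 1 + b) x (a + 1)) (hk : 1 ≤ k) (hkb : k ≤ b) :
    ancestors (a + 1 + b) x (a + 1 + k) =
      insert (a + 1) ((ancestors b (tailSeq (a + 1) x) k).map (addLeftEmbedding (a + 1))) := by
  ext j
  simp only [Finset.mem_insert, Finset.mem_map, mem_ancestors, isAncestor_tailSeq_iff,
    addLeftEmbedding_apply]
  constructor
  · rintro ⟨⟨hj, hjn⟩, h⟩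
    rcases lt_trichotomy j (a + 1) with hja | rfl | hja
    · have := hroot.lt_of_isAncestor h hj hja
      omega
    · exact .inl rfl
    · obtain ⟨l, rfl⟩ := Nat.exists_eq_add_of_le hja.le
      exact .inr ⟨l, ⟨by omega, h⟩, rfl⟩
  · rintro (rfl | ⟨l, ⟨hl, h⟩, rfl⟩)
    · exact ⟨by omega, hroot.isAncestor (by omega) (by omega)⟩
    · exact ⟨by omega, h⟩

lemma IsRoot.card_ancestors_right (hroot : IsRoot (a + 1 + b) x (a + 1))
    (hk : 1 ≤ k) (hkb : k ≤ b) :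
    (ancestors (a + 1 + b) x (a + 1 + k)).card =
      (ancestors b (tailSeq (a + 1) x) k).card + 1 := by
  rw [hroot.ancestors_right hk hkb, Finset.card_insert_of_notMem, Finset.card_map]
  simp only [Finset.mem_map, mem_ancestors, addLeftEmbedding_apply]
  omega

lemma IsRoot.leftSpine_root (hroot : IsRoot (a + 1 + b) x (a + 1)) :
    leftSpine x (a + 1) = ancestors a x a := by
  ext j
  rw [mem_leftSpine, mem_ancestors, Nat.add_sub_cancel]
  constructor
  · exact fun ⟨hj, _, h⟩ => ⟨⟨hj.1, Nat.lt_succ_iff.1 hj.2⟩, h⟩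
  · exact fun ⟨hj, h⟩ => ⟨by omega, hroot.isAncestor hj.1 (by omega), h⟩

lemma IsRoot.rightSpine_root (hroot : IsRoot (a + 1 + b) x (a + 1)) :
    rightSpine (a + 1 + b) x (a + 1) =
      (ancestors b (tailSeq (a + 1) x) 1).map (addLeftEmbedding (a + 1)) := by
  ext j
  simp only [mem_rightSpine, Finset.mem_map, mem_ancestors, isAncestor_tailSeq_iff,
    addLeftEmbedding_apply]
  constructor
  · rintro ⟨hj, _, h⟩
    obtain ⟨l, rfl⟩ := Nat.exists_eq_add_of_le hj.1.le
    exact ⟨l, ⟨by omega, h⟩, rfl⟩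
  · rintro ⟨l, ⟨hl, h⟩, rfl⟩
    exact ⟨by omega, hroot.isAncestor (by omega) (by omega), h⟩

lemma IsRoot.rightSpine_left (hroot : IsRoot (a + 1 + b) x (a + 1)) (hi : 1 ≤ i) (hia : i ≤ a) :
    rightSpine (a + 1 + b) x i = rightSpine a x i := by
  ext j
  rw [mem_rightSpine, mem_rightSpine]
  refine and_congr_left fun h => ⟨fun hj => ?_, fun hj => by omega⟩
  have := hroot.lt_of_isAncestor h.1 hi (by omega)
  omega

lemma IsRoot.leftSpine_right (hroot : IsRoot (a + 1 + b) x (a + 1)) (hi : 1 ≤ i) (hib : i ≤ b) :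
    leftSpine x (a + 1 + i) =
      (leftSpine (tailSeq (a + 1) x) i).map (addLeftEmbedding (a + 1)) := by
  ext j
  simp only [mem_leftSpine, Finset.mem_map, isAncestor_tailSeq_iff, addLeftEmbedding_apply,
    ← Nat.add_sub_assoc hi]
  constructor
  · rintro ⟨hj, h⟩
    have hja := hroot.gt_of_isAncestor h.1 (by omega) (by omega)
    obtain ⟨l, rfl⟩ := Nat.exists_eq_add_of_le hja.le
    exact ⟨l, ⟨by omega, h⟩, rfl⟩
  · rintro ⟨l, ⟨hl, h⟩, rfl⟩
    exact ⟨by omega, h⟩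

lemma IsRoot.swapCount_left (hroot : IsRoot (a + 1 + b) x (a + 1)) (hia : i + 1 ≤ a) :
    swapCount (a + 1 + b) x i = swapCount a x i := by
  rw [swapCount, swapCount, hroot.rightSpine_left (Nat.le_add_left 1 i) hia]

lemma IsRoot.swapCount_right (hroot : IsRoot (a + 1 + b) x (a + 1)) (hi : 1 ≤ i) (hib : i + 1 ≤ b) :
    swapCount (a + 1 + b) x (a + 1 + i) = swapCount b (tailSeq (a + 1) x) i := by
  rw [swapCount, swapCount, hroot.leftSpine_right hi (by omega), add_assoc (a + 1) i 1,
    rightSpine_tailSeq, Finset.card_map, Finset.card_map]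
  rfl

lemma IsRoot.swapCount_pred (hroot : IsRoot (a + 1 + b) x (a + 1)) (ha : 1 ≤ a) :
    swapCount (a + 1 + b) x a = (ancestors b (tailSeq (a + 1) x) 1).card + 1 := by
  rw [swapCount, if_neg (hroot.lt a ha (by omega) (by omega)).not_gt, hroot.rightSpine_root,
    Finset.card_map]

lemma IsRoot.swapCount_root (hroot : IsRoot (a + 1 + b) x (a + 1)) (hb : 1 ≤ b) :
    swapCount (a + 1 + b) x (a + 1) = (ancestors a x a).card + 1 := by
  rw [swapCount, if_pos (hroot.lt _ (by omega) (by omega) (by omega)), hroot.leftSpine_root]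

theorem ncard_NG_of_isRoot (hroot : IsRoot (a + 1 + b) x (a + 1))
    (hx : IsSeq (a + 1 + b) x) (ha : 1 ≤ a) (hb : 1 ≤ b) :
    (NG (a + 1 + b) x).ncard =
      (NG a x).ncard + (NG b (tailSeq (a + 1) x)).ncard +
        ((ancestors a x a).card + (ancestors b (tailSeq (a + 1) x) 1).card + 2) := by
  have hleft : ∑ i ∈ Finset.Ico 1 a, swapCount (a + 1 + b) x i = (NG a x).ncard := by
    rw [ncard_NG (Set.InjOn.mono (Set.Icc_subset_Icc_right (by omega)) hx)]
    exact Finset.sum_congr rfl fun i hi => hroot.swapCount_left (Finset.mem_Ico.1 hi).2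
  have hright : ∑ i ∈ Finset.Ico (a + 1 + 1) (a + 1 + b), swapCount (a + 1 + b) x i =
      (NG b (tailSeq (a + 1) x)).ncard := by
    rw [ncard_NG hx.tailSeq, add_comm (a + 1) 1, add_comm (a + 1) b,
      ← Finset.sum_Ico_add', add_comm b]
    refine Finset.sum_congr rfl fun i hi => ?_
    rw [Finset.mem_Ico] at hi
    rw [add_comm i, hroot.swapCount_right hi.1 hi.2]
  rw [ncard_NG hx, ← Finset.sum_Ico_consecutive _ ha (by omega : a ≤ a + 1 + b),
    Finset.sum_eq_sum_Ico_succ_bot (by omega : a < a + 1 + b),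
    Finset.sum_eq_sum_Ico_succ_bot (by omega : a + 1 < a + 1 + b),
    hleft, hright, hroot.swapCount_pred ha, hroot.swapCount_root hb]
  ring

end Root

/-! ### Complete binary trees -/

section CompSeq

variable {h k l : ℕ}

lemma compSeq_lt_iff (hk : 1 ≤ k) (hkh : k < 2 ^ (h + 1)) (hl : 1 ≤ l)
    (hlh : l < 2 ^ (h + 1)) :
    compSeq h k < compSeq h l ↔
      padicValNat 2 l < padicValNat 2 k ∨ padicValNat 2 k = padicValNat 2 l ∧ k < l := by
  have hvk := padicValNat_lt_of_lt_pow hk hkh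
  have hvl := padicValNat_lt_of_lt_pow hl hlh
  have hcast : compSeq h k < compSeq h l ↔
      (h - padicValNat 2 k) * 2 ^ (h + 1) + k < (h - padicValNat 2 l) * 2 ^ (h + 1) + l := by
    unfold compSeq
    exact_mod_cast Iff.rfl
  rw [hcast, mul_add_lt_mul_add_iff hkh hlh]
  omega

lemma isSeq_compSeq (h : ℕ) : IsSeq (2 ^ (h + 1) - 1) (compSeq h) := by
  rintro k ⟨hk, hkn⟩ l ⟨hl, hln⟩ hkl
  have hlt := compSeq_lt_iff (h := h) hk (by omega) hl (by omega)
  have hgt := compSeq_lt_iff (h := h) hl (by omega) hk (by omega)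
  omega

lemma isSeq_compSeq_succ (h : ℕ) :
    IsSeq (2 ^ (h + 1) - 1 + 1 + (2 ^ (h + 1) - 1)) (compSeq (h + 1)) :=
  two_pow_add_two_sub_one h ▸ isSeq_compSeq (h + 1)

lemma isRoot_compSeq_succ (h : ℕ) :
    IsRoot (2 ^ (h + 1) - 1 + 1 + (2 ^ (h + 1) - 1)) (compSeq (h + 1)) (2 ^ (h + 1) - 1 + 1) := by
  rw [Nat.sub_add_cancel Nat.one_le_two_pow]
  refine ⟨Nat.one_le_two_pow, Nat.le_add_right _ _, fun k hk hkn hne => ?_⟩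
  have hval : padicValNat 2 k < h + 1 := by
    rcases lt_or_gt_of_ne hne with hlt | hgt
    · exact padicValNat_lt_of_lt_pow hk hlt
    · obtain ⟨r, rfl⟩ := Nat.exists_eq_add_of_le hgt.le
      rw [padicValNat_prime_pow_add (by omega) (by omega)]
      exact padicValNat_lt_of_lt_pow (by omega) (by omega)
  rw [compSeq_lt_iff Nat.one_le_two_pow (by omega) hk (by omega), padicValNat.prime_pow]
  exact .inl hval

lemma compSeq_succ_mem_treeClass (h : ℕ) :
    compSeq (h + 1) ∈ treeClass (2 ^ (h + 1) - 1) (compSeq h) := by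
  refine ⟨Set.InjOn.mono (Set.Icc_subset_Icc_right (by omega)) (isSeq_compSeq_succ h),
    PDvec_eq_of_lt_iff fun k l hk hkn hl hln => ?_⟩
  rw [compSeq_lt_iff hk (by omega) hl (by omega), compSeq_lt_iff hk (by omega) hl (by omega)]

lemma tailSeq_compSeq_succ_mem_treeClass (h : ℕ) :
    tailSeq (2 ^ (h + 1) - 1 + 1) (compSeq (h + 1)) ∈
      treeClass (2 ^ (h + 1) - 1) (compSeq h) := by
  refine ⟨(isSeq_compSeq_succ h).tailSeq, PDvec_eq_of_lt_iff fun k l hk hkn hl hln => ?_⟩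
  rw [Nat.sub_add_cancel Nat.one_le_two_pow, tailSeq, tailSeq,
    compSeq_lt_iff (by omega) (by omega) (by omega) (by omega),
    compSeq_lt_iff hk (by omega) hl (by omega), padicValNat_prime_pow_add hk (by omega),
    padicValNat_prime_pow_add hl (by omega), Nat.add_lt_add_iff_left]

lemma ancestors_one_one (x : ℕ → ℤ) : ancestors 1 x 1 = {1} := by
  ext j
  rw [mem_ancestors, Finset.mem_singleton]
  refine ⟨fun hj => by omega, ?_⟩
  rintro rfl
  exact ⟨by omega, fun m hm hm' => (show m = 1 by omega) ▸ le_rfl⟩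

lemma card_ancestors_compSeq_first (h : ℕ) :
    (ancestors (2 ^ (h + 1) - 1) (compSeq h) 1).card = h + 1 := by
  induction h with
  | zero => rw [zero_add, pow_one, ancestors_one_one, Finset.card_singleton]
  | succ h ih =>
    have hone := one_le_two_pow_succ_sub_one h
    rw [two_pow_add_two_sub_one, (isRoot_compSeq_succ h).card_ancestors_left le_rfl hone,
      ancestors_congr (isSeq_compSeq h) (compSeq_succ_mem_treeClass h) le_rfl hone, ih]

lemma card_ancestors_compSeq_last (h : ℕ) :
    (ancestors (2 ^ (h + 1) - 1) (compSeq h) (2 ^ (h + 1) - 1)).card = h + 1 := by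
  induction h with
  | zero => rw [zero_add, pow_one, ancestors_one_one, Finset.card_singleton]
  | succ h ih =>
    have hone := one_le_two_pow_succ_sub_one h
    rw [two_pow_add_two_sub_one, (isRoot_compSeq_succ h).card_ancestors_right hone le_rfl,
      ancestors_congr (isSeq_compSeq h) (tailSeq_compSeq_succ_mem_treeClass h) hone le_rfl, ih]

end CompSeq

/-- For every `h ≥ 1`, `|NG(x_h)| = 2·|NG(x_{h-1})| + 2(h+1)` (stated with `h → h+1`). -/
theorem stmt16 (h : ℕ) :
    (NG (2 ^ (h + 2) - 1) (compSeq (h + 1))).ncard =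
      2 * (NG (2 ^ (h + 1) - 1) (compSeq h)).ncard + 2 * (h + 2) := by
  have hseq := isSeq_compSeq h
  have hone := one_le_two_pow_succ_sub_one h
  have hleft := compSeq_succ_mem_treeClass h
  have hright := tailSeq_compSeq_succ_mem_treeClass h
  rw [two_pow_add_two_sub_one,
    ncard_NG_of_isRoot (isRoot_compSeq_succ h) (isSeq_compSeq_succ h) hone hone,
    NG_congr hleft.2, NG_congr hright.2, ancestors_congr hseq hleft hone le_rfl,
    ancestors_congr hseq hright le_rfl hone, card_ancestors_compSeq_last,
    card_ancestors_compSeq_first]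
  ring
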